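/- In dimension n = 2, for the Weyl connection W(g,B) with Christoffel symbols W^σ_{μν} = Γ^σ_{μν}(g) + (1/2)(δ^σ_ν B_μ + δ^σ_μ B_ν − g_{μν} B^σ), the symmetric part of its Ricci tensor satisfies R_{(μν)}(W) = (1/2)(R(g) − D_α B^α)·g_{μν}, where R(g) is the scalar curvature of g and D is the Levi-Civita covariant derivative of g. Consequently R_{(μν)}(W) − (1/2)·𝓡·g_{μν} = 0 identically, with 𝓡 = g^{μν}R_{(μν)}(W) = R(g) − D_α B^α. -/

import Mathlib

open scoped BigOperators

/-- Partial derivative `∂_μ f` in coordinates on `ℝⁿ`. -/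
noncomputable def pd {n : ℕ} (f : (Fin n → ℝ) → ℝ) (μ : Fin n)
    (x : Fin n → ℝ) : ℝ :=
  fderiv ℝ f x (Pi.single μ 1)

/-- Christoffel symbols `Γ^σ_{μν}(g)` of the Levi-Civita connection of `g`. -/
noncomputable def christoffel {n : ℕ}
    (g : (Fin n → ℝ) → Matrix (Fin n) (Fin n) ℝ)
    (x : Fin n → ℝ) (σ μ ν : Fin n) : ℝ :=
  (1 / 2) * ∑ α, (g x)⁻¹ σ α *
    (pd (fun y => g y ν α) μ x + pd (fun y => g y μ α) ν x
      - pd (fun y => g y μ ν) α x)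

/-- Ricci tensor `R_{μσ} = ∂_ν Γ^ν_{μσ} - ∂_σ Γ^ν_{μν}
    + Γ^ν_{αν} Γ^α_{μσ} - Γ^ν_{ασ} Γ^α_{μν}` of a connection `Γ^λ_{μν}`
    (first argument of `Γ x` is the upper index). -/
noncomputable def ricci {n : ℕ}
    (Γ : (Fin n → ℝ) → Fin n → Fin n → Fin n → ℝ)
    (x : Fin n → ℝ) (μ σ : Fin n) : ℝ :=
  ∑ ν, pd (fun y => Γ y ν μ σ) ν x - ∑ ν, pd (fun y => Γ y ν μ ν) σ x
    + ∑ ν, ∑ α, Γ x ν α ν * Γ x α μ σ - ∑ ν, ∑ α, Γ x ν α σ * Γ x α μ ν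

/-- Symmetrized Ricci tensor `R_{(μν)}`. -/
noncomputable def ricciSym {n : ℕ}
    (Γ : (Fin n → ℝ) → Fin n → Fin n → Fin n → ℝ)
    (x : Fin n → ℝ) (μ ν : Fin n) : ℝ :=
  (1 / 2) * (ricci Γ x μ ν + ricci Γ x ν μ)

/-- Scalar curvature `R(g) = g^{μν} R_{μν}(Γ(g))` of a metric `g`. -/
noncomputable def scalarCurv {n : ℕ}
    (g : (Fin n → ℝ) → Matrix (Fin n) (Fin n) ℝ) (x : Fin n → ℝ) : ℝ :=
  ∑ μ, ∑ ν, (g x)⁻¹ μ ν * ricci (christoffel g) x μ ν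

/-- Lowered index `B_μ = g_{μα} B^α`. -/
noncomputable def lowerIdx {n : ℕ}
    (g : (Fin n → ℝ) → Matrix (Fin n) (Fin n) ℝ)
    (B : (Fin n → ℝ) → Fin n → ℝ) (x : Fin n → ℝ) (μ : Fin n) : ℝ :=
  ∑ α, g x μ α * B x α

/-- Weyl connection
`W^σ_{μν} = Γ^σ_{μν}(g) + (1/2)(δ^σ_ν B_μ + δ^σ_μ B_ν - g_{μν} B^σ)`. -/
noncomputable def weyl {n : ℕ}
    (g : (Fin n → ℝ) → Matrix (Fin n) (Fin n) ℝ)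
    (B : (Fin n → ℝ) → Fin n → ℝ)
    (x : Fin n → ℝ) (σ μ ν : Fin n) : ℝ :=
  christoffel g x σ μ ν +
    (1 / 2) * ((if σ = ν then lowerIdx g B x μ else 0)
      + (if σ = μ then lowerIdx g B x ν else 0) - g x μ ν * B x σ)

/-- Levi-Civita covariant divergence `D_α B^α`. -/
noncomputable def covDiv {n : ℕ}
    (g : (Fin n → ℝ) → Matrix (Fin n) (Fin n) ℝ)
    (B : (Fin n → ℝ) → Fin n → ℝ) (x : Fin n → ℝ) : ℝ :=
  ∑ α, pd (fun y => B y α) α x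
    + ∑ α, ∑ β, christoffel g x α β α * B x β

/-!
In any dimension `n`, replacing the Levi-Civita connection `Γ` by `Γ + T` changes the Ricci tensor
by `∇_ν T^ν_{μσ} - ∇_σ T^ν_{μν}` plus terms quadratic in `T`. For the Weyl difference tensor `T`,
metric compatibility of `Γ` reduces the symmetrized change to `-(1/2) (D_α B^α) g_{μσ}` and a
multiple of `n - 2`.

In dimension two the curvature of a metric connection, with its index lowered by `g`, is a skew
`2 × 2` matrix and hence has a single component; this makes the Ricci tensor of `g` proportional
to `g`, and taking the trace identifies the factor as `R(g) / 2`.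
-/

open scoped Topology Matrix

section PartialDerivative

variable {n : ℕ} {f h : (Fin n → ℝ) → ℝ} {x : Fin n → ℝ}

lemma pd_congr (hfh : f =ᶠ[𝓝 x] h) (μ : Fin n) : pd f μ x = pd h μ x := by
  rw [pd, pd, hfh.fderiv_eq]

lemma pd_add (hf : DifferentiableAt ℝ f x) (hh : DifferentiableAt ℝ h x) (μ : Fin n) :
    pd (fun y => f y + h y) μ x = pd f μ x + pd h μ x := by
  simp only [pd, fderiv_fun_add hf hh, add_apply]

lemma pd_sub (hf : DifferentiableAt ℝ f x) (hh : DifferentiableAt ℝ h x) (μ : Fin n) :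
    pd (fun y => f y - h y) μ x = pd f μ x - pd h μ x := by
  simp only [pd, fderiv_fun_sub hf hh, sub_apply]

lemma pd_mul (hf : DifferentiableAt ℝ f x) (hh : DifferentiableAt ℝ h x) (μ : Fin n) :
    pd (fun y => f y * h y) μ x = pd f μ x * h x + f x * pd h μ x := by
  simp [pd, fderiv_fun_mul hf hh, mul_comm, add_comm]

lemma pd_const_mul (hf : DifferentiableAt ℝ f x) (c : ℝ) (μ : Fin n) :
    pd (fun y => c * f y) μ x = c * pd f μ x := by
  simp [pd, fderiv_const_mul hf]

lemma pd_sum {ι : Type*} {s : Finset ι} {F : ι → (Fin n → ℝ) → ℝ}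
    (hF : ∀ i ∈ s, DifferentiableAt ℝ (F i) x) (μ : Fin n) :
    pd (fun y => ∑ i ∈ s, F i y) μ x = ∑ i ∈ s, pd (F i) μ x := by
  simp [pd, fderiv_fun_sum hF]

lemma pd_ite_zero (p : Prop) [Decidable p] (μ : Fin n) :
    pd (fun y => if p then f y else 0) μ x = if p then pd f μ x else 0 := by
  split_ifs <;> simp [pd]

lemma differentiableAt_ite_zero {p : Prop} [Decidable p] (hf : DifferentiableAt ℝ f x) :
    DifferentiableAt ℝ (fun y => if p then f y else 0) x := by
  split_ifs <;> simp [hf]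

lemma differentiableAt_pd (hf : ContDiffAt ℝ 2 f x) (μ : Fin n) :
    DifferentiableAt ℝ (pd f μ) x :=
  ((hf.fderiv_right (m := 1) (by norm_num)).differentiableAt one_ne_zero).clm_apply
    (differentiableAt_const _)

lemma pd_comm (hf : ContDiffAt ℝ 2 f x) (μ ν : Fin n) :
    pd (pd f μ) ν x = pd (pd f ν) μ x := by
  have pd_pd (α β : Fin n) :
      pd (pd f α) β x = fderiv ℝ (fderiv ℝ f) x (Pi.single β 1) (Pi.single α 1) := by
    have hf' := (hf.fderiv_right (m := 1) (by norm_num)).differentiableAt one_ne_zero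
    change fderiv ℝ (fun y => fderiv ℝ f y (Pi.single α 1)) x (Pi.single β 1) = _
    simp [fderiv_clm_apply hf' (differentiableAt_const _)]
  rw [pd_pd, pd_pd]
  exact hf.isSymmSndFDerivAt (by simp) _ _

end PartialDerivative

section MatrixCalculus

/-- The entrywise partial derivative `∂_μ A` of a matrix-valued function; it puts metric
compatibility and the curvature in index-free form. -/
noncomputable def pdMatrix {n : ℕ} {ι κ : Type*} (A : (Fin n → ℝ) → Matrix ι κ ℝ) (μ : Fin n)
    (x : Fin n → ℝ) : Matrix ι κ ℝ :=
  Matrix.of fun i j => pd (fun y => A y i j) μ x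

variable {n : ℕ} {ι κ l : Type*} {x : Fin n → ℝ}

lemma pdMatrix_congr {A C : (Fin n → ℝ) → Matrix ι κ ℝ} (h : A =ᶠ[𝓝 x] C) (μ : Fin n) :
    pdMatrix A μ x = pdMatrix C μ x := by
  ext i j
  exact pd_congr (h.mono fun y hy => congr_fun₂ hy i j) μ

lemma pdMatrix_add {A C : (Fin n → ℝ) → Matrix ι κ ℝ}
    (hA : ∀ i j, DifferentiableAt ℝ (fun y => A y i j) x)
    (hC : ∀ i j, DifferentiableAt ℝ (fun y => C y i j) x) (μ : Fin n) :
    pdMatrix (fun y => A y + C y) μ x = pdMatrix A μ x + pdMatrix C μ x := by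
  ext i j
  exact pd_add (hA i j) (hC i j) μ

lemma differentiableAt_matrix_mul [Fintype κ] {A : (Fin n → ℝ) → Matrix ι κ ℝ}
    {C : (Fin n → ℝ) → Matrix κ l ℝ}
    (hA : ∀ i j, DifferentiableAt ℝ (fun y => A y i j) x)
    (hC : ∀ i j, DifferentiableAt ℝ (fun y => C y i j) x) (i : ι) (j : l) :
    DifferentiableAt ℝ (fun y => (A y * C y) i j) x := by
  simp only [Matrix.mul_apply]
  fun_prop

lemma pdMatrix_mul [Fintype κ] {A : (Fin n → ℝ) → Matrix ι κ ℝ}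
    {C : (Fin n → ℝ) → Matrix κ l ℝ}
    (hA : ∀ i j, DifferentiableAt ℝ (fun y => A y i j) x)
    (hC : ∀ i j, DifferentiableAt ℝ (fun y => C y i j) x) (μ : Fin n) :
    pdMatrix (fun y => A y * C y) μ x = pdMatrix A μ x * C x + A x * pdMatrix C μ x := by
  ext i j
  simp only [pdMatrix, Matrix.of_apply, Matrix.add_apply, Matrix.mul_apply]
  rw [pd_sum fun k _ => (hA i k).fun_mul (hC k j), ← Finset.sum_add_distrib]
  exact Finset.sum_congr rfl fun k _ => pd_mul (hA i k) (hC k j) μ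

lemma pdMatrix_comm {A : (Fin n → ℝ) → Matrix ι κ ℝ}
    (hA : ∀ i j, ContDiffAt ℝ 2 (fun y => A y i j) x) (μ ν : Fin n) :
    pdMatrix (pdMatrix A μ) ν x = pdMatrix (pdMatrix A ν) μ x := by
  ext i j
  exact pd_comm (hA i j) μ ν

variable [Fintype ι] [DecidableEq ι]

lemma differentiableAt_det {A : (Fin n → ℝ) → Matrix ι ι ℝ}
    (hA : ∀ i j, DifferentiableAt ℝ (fun y => A y i j) x) :
    DifferentiableAt ℝ (fun y => (A y).det) x := by
  simp only [Matrix.det_apply]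
  fun_prop

lemma differentiableAt_matrix_inv {A : (Fin n → ℝ) → Matrix ι ι ℝ}
    (hA : ∀ i j, DifferentiableAt ℝ (fun y => A y i j) x) (hdet : IsUnit (A x).det) (i j : ι) :
    DifferentiableAt ℝ (fun y => (A y)⁻¹ i j) x := by
  have hadj : DifferentiableAt ℝ (fun y => (A y).adjugate i j) x := by
    simp only [Matrix.adjugate_apply]
    refine differentiableAt_det fun k m => ?_
    by_cases hk : k = j <;> simp [Matrix.updateRow_apply, hk, hA]
  simp only [Matrix.inv_def, Ring.inverse_eq_inv', Matrix.smul_apply, smul_eq_mul]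
  exact ((differentiableAt_det hA).inv hdet.ne_zero).mul hadj

end MatrixCalculus

section Curvature

variable {n : ℕ}

/-- The connection matrix `Γ_μ`, with entries `(Γ_μ)^ρ_σ = Γ^ρ_{σμ}`: the index of
differentiation is the last one, as in `ricci`. -/
def connMatrix (Γ : (Fin n → ℝ) → Fin n → Fin n → Fin n → ℝ) (μ : Fin n) (x : Fin n → ℝ) :
    Matrix (Fin n) (Fin n) ℝ :=
  Matrix.of fun ρ σ => Γ x ρ σ μ

/-- The Riemann curvature `R_{μν} = ∂_μ Γ_ν - ∂_ν Γ_μ + [Γ_μ, Γ_ν]`, as the matrix with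
entries `R^ρ_{σμν}`. -/
noncomputable def riemann (Γ : (Fin n → ℝ) → Fin n → Fin n → Fin n → ℝ) (x : Fin n → ℝ)
    (μ ν : Fin n) : Matrix (Fin n) (Fin n) ℝ :=
  pdMatrix (connMatrix Γ ν) μ x - pdMatrix (connMatrix Γ μ) ν x
    + connMatrix Γ μ x * connMatrix Γ ν x - connMatrix Γ ν x * connMatrix Γ μ x

variable {g : (Fin n → ℝ) → Matrix (Fin n) (Fin n) ℝ}
  {Γ : (Fin n → ℝ) → Fin n → Fin n → Fin n → ℝ} {x : Fin n → ℝ}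

lemma riemann_swap (μ ν : Fin n) : riemann Γ x ν μ = -riemann Γ x μ ν := by
  simp only [riemann]
  abel

lemma riemann_self (μ : Fin n) : riemann Γ x μ μ = 0 := by
  simp [riemann]

lemma ricci_eq_sum_riemann (μ σ : Fin n) : ricci Γ x μ σ = ∑ ν, riemann Γ x ν σ ν μ := by
  simp [ricci, riemann, pdMatrix, connMatrix, Matrix.mul_apply, Finset.sum_add_distrib]

/-- The connection `Γ` is compatible with `g` at `x`, i.e. `∇g = 0` there, written as
`∂_κ g = Γ_κᵀ g + g Γ_κ`. -/
def IsMetricConnectionAt (g : (Fin n → ℝ) → Matrix (Fin n) (Fin n) ℝ)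
    (Γ : (Fin n → ℝ) → Fin n → Fin n → Fin n → ℝ) (x : Fin n → ℝ) : Prop :=
  ∀ κ, pdMatrix g κ x = (connMatrix Γ κ x)ᵀ * g x + g x * connMatrix Γ κ x

/-- Differentiating `∂_ν g = Γ_νᵀ g + g Γ_ν` once more and antisymmetrizing, the commuting second
derivatives of `g` drop out and only the curvature is left. -/
lemma transpose_metric_mul_riemann (hg : ∀ μ ν, ContDiffAt ℝ 2 (fun y => g y μ ν) x)
    (hsymm : (g x).IsSymm) (hΓ : ∀ σ μ ν, DifferentiableAt ℝ (fun y => Γ y σ μ ν) x)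
    (hcompat : ∀ᶠ y in 𝓝 x, IsMetricConnectionAt g Γ y) (μ ν : Fin n) :
    (g x * riemann Γ x μ ν)ᵀ = -(g x * riemann Γ x μ ν) := by
  have hg' (i j : Fin n) : DifferentiableAt ℝ (fun y => g y i j) x :=
    (hg i j).differentiableAt two_ne_zero
  have second_derivative (κ l : Fin n) : pdMatrix (pdMatrix g κ) l x =
      (pdMatrix (connMatrix Γ κ) l x)ᵀ * g x + (connMatrix Γ κ x)ᵀ * pdMatrix g l x
        + (pdMatrix g l x * connMatrix Γ κ x + g x * pdMatrix (connMatrix Γ κ) l x) := by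
    have hΓκ (i j : Fin n) : DifferentiableAt ℝ (fun y => connMatrix Γ κ y i j) x := hΓ i j κ
    have hΓκt (i j : Fin n) : DifferentiableAt ℝ (fun y => (connMatrix Γ κ y)ᵀ i j) x := hΓ j i κ
    rw [pdMatrix_congr (hcompat.mono fun y hy => hy κ),
      pdMatrix_add (differentiableAt_matrix_mul hΓκt hg') (differentiableAt_matrix_mul hg' hΓκ),
      pdMatrix_mul hΓκt hg', pdMatrix_mul hg' hΓκ]
    rfl
  have hcomm := pdMatrix_comm hg ν μ
  rw [second_derivative, second_derivative, hcompat.self_of_nhds μ, hcompat.self_of_nhds ν,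
    ← sub_eq_zero] at hcomm
  rw [← sub_eq_zero, sub_neg_eq_add, ← hcomm, riemann]
  simp only [Matrix.transpose_mul, Matrix.transpose_add, Matrix.transpose_sub, hsymm.eq]
  noncomm_ring

end Curvature

section LeviCivita

variable {n : ℕ} {g : (Fin n → ℝ) → Matrix (Fin n) (Fin n) ℝ} {x : Fin n → ℝ}

lemma pd_metric_comm (hsymm : ∀ᶠ y in 𝓝 x, (g y).IsSymm) (μ ν κ : Fin n) :
    pd (fun y => g y μ ν) κ x = pd (fun y => g y ν μ) κ x :=
  pd_congr (hsymm.mono fun _ hy => hy.apply ν μ) κ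

lemma christoffel_comm (hsymm : ∀ᶠ y in 𝓝 x, (g y).IsSymm) (σ μ ν : Fin n) :
    christoffel g x σ μ ν = christoffel g x σ ν μ := by
  simp only [christoffel, pd_metric_comm hsymm μ ν,
    add_comm (pd (fun y => g y μ _) ν x)]

lemma sum_metric_mul_christoffel (hdet : IsUnit (g x).det) (κ μ ν : Fin n) :
    ∑ α, g x κ α * christoffel g x α μ ν =
      (1 / 2) * (pd (fun y => g y ν κ) μ x + pd (fun y => g y μ κ) ν x
        - pd (fun y => g y μ ν) κ x) := by
  set c : Fin n → ℝ := fun α => pd (fun y => g y ν α) μ x + pd (fun y => g y μ α) ν x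
    - pd (fun y => g y μ ν) α x
  have hc : g x *ᵥ ((g x)⁻¹ *ᵥ c) = c := by
    rw [Matrix.mulVec_mulVec, Matrix.mul_nonsing_inv _ hdet, Matrix.one_mulVec]
  calc ∑ α, g x κ α * christoffel g x α μ ν
      = (1 / 2) * (g x *ᵥ ((g x)⁻¹ *ᵥ c)) κ := by
        simp only [christoffel, Matrix.mulVec, dotProduct, Finset.mul_sum, c]
        exact Finset.sum_congr rfl fun α _ => Finset.sum_congr rfl fun β _ => by ring
    _ = (1 / 2) * c κ := by rw [hc]

lemma pd_metric (hsymm : ∀ᶠ y in 𝓝 x, (g y).IsSymm) (hdet : IsUnit (g x).det) (κ μ ν : Fin n) :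
    pd (fun y => g y μ ν) κ x =
      ∑ α, g x ν α * christoffel g x α μ κ + ∑ α, g x μ α * christoffel g x α ν κ := by
  rw [sum_metric_mul_christoffel hdet, sum_metric_mul_christoffel hdet,
    pd_metric_comm hsymm κ ν, pd_metric_comm hsymm κ μ, pd_metric_comm hsymm ν μ]
  ring

lemma isMetricConnectionAt_christoffel (hsymm : ∀ᶠ y in 𝓝 x, (g y).IsSymm)
    (hdet : IsUnit (g x).det) : IsMetricConnectionAt g (christoffel g) x := by
  intro κ
  ext μ ν
  simp only [pdMatrix, connMatrix, Matrix.of_apply, Matrix.add_apply, Matrix.mul_apply,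
    Matrix.transpose_apply, pd_metric hsymm hdet, hsymm.self_of_nhds.apply ν,
    mul_comm (g x ν _)]

lemma eventually_isUnit_det (hg : ∀ μ ν, DifferentiableAt ℝ (fun y => g y μ ν) x)
    (hdet : IsUnit (g x).det) : ∀ᶠ y in 𝓝 x, IsUnit (g y).det :=
  ((differentiableAt_det hg).continuousAt.eventually_ne hdet.ne_zero).mono fun _ => Ne.isUnit

lemma differentiableAt_christoffel (hg : ∀ μ ν, ContDiffAt ℝ 2 (fun y => g y μ ν) x)
    (hdet : IsUnit (g x).det) (σ μ ν : Fin n) :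
    DifferentiableAt ℝ (fun y => christoffel g y σ μ ν) x := by
  have hg' (i j κ : Fin n) := differentiableAt_pd (hg i j) κ
  have hinv := differentiableAt_matrix_inv
    (fun i j => (hg i j).differentiableAt two_ne_zero) hdet
  exact (DifferentiableAt.fun_sum fun α _ => (hinv σ α).mul
    (((hg' ν α μ).add (hg' μ α ν)).sub (hg' μ ν α))).const_mul _

end LeviCivita

section Contraction

variable {ι R : Type*} [Fintype ι] [DecidableEq ι] [CommRing R]

lemma sum_inv_mul_self {A : Matrix ι ι R} (hA : A.IsSymm) (hdet : IsUnit A.det) :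
    ∑ i, ∑ j, A⁻¹ i j * A i j = Fintype.card ι := by
  have htrace : (A⁻¹ * A).trace = Fintype.card ι := by
    rw [Matrix.nonsing_inv_mul _ hdet, Matrix.trace_one]
  simpa only [Matrix.trace, Matrix.diag_apply, Matrix.mul_apply, hA.apply] using htrace

lemma sum_inv_mul_of_eq_mul {A : Matrix ι ι R} {S : ι → ι → R} {c : R}
    (hA : A.IsSymm) (hdet : IsUnit A.det) (hS : ∀ i j, S i j = c * A i j) :
    ∑ i, ∑ j, A⁻¹ i j * S i j = Fintype.card ι * c := by
  calc ∑ i, ∑ j, A⁻¹ i j * S i j = c * ∑ i, ∑ j, A⁻¹ i j * A i j := by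
        simp only [hS, Finset.mul_sum, mul_left_comm]
    _ = Fintype.card ι * c := by rw [sum_inv_mul_self hA hdet, mul_comm]

end Contraction

section TwoDim

/-- A skew `2 × 2` matrix is a multiple of `ε = !![0, 1; -1, 0]`, and the matrix on the right is
`G.det • (G⁻¹ * ε)`. -/
lemma exists_eq_smul_of_transpose_mul_eq_neg {K : Type*} [Field K] [NeZero (2 : K)]
    {G R : Matrix (Fin 2) (Fin 2) K} (hG : G.IsSymm) (hdet : IsUnit G.det)
    (hGR : (G * R)ᵀ = -(G * R)) :
    ∃ k : K, R = k • !![G 0 1, G 1 1; -G 0 0, -G 0 1] := by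
  have diag_eq_zero (i : Fin 2) : (G * R) i i = 0 := by
    have hi : (G * R) i i = -(G * R) i i := congr_fun₂ hGR i i
    have : 2 * (G * R) i i = 0 := by linear_combination hi
    simpa [two_ne_zero] using this
  have hGR10 : (G * R) 1 0 = -(G * R) 0 1 := congr_fun₂ hGR 0 1
  have hG10 : G 1 0 = G 0 1 := hG.apply 0 1
  obtain ⟨b, hb⟩ : ∃ b, G * R = !![0, b; -b, 0] :=
    ⟨(G * R) 0 1, (Matrix.eta_fin_two _).trans (by rw [diag_eq_zero, diag_eq_zero, hGR10])⟩
  refine ⟨G.det⁻¹ * b, ?_⟩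
  calc R = G⁻¹ * !![0, b; -b, 0] := by rw [← hb, Matrix.nonsing_inv_mul_cancel_left G R hdet]
    _ = (G.det⁻¹ * b) • !![G 0 1, G 1 1; -G 0 0, -G 0 1] := by
      rw [Matrix.inv_def, Matrix.adjugate_fin_two, hG10, Ring.inverse_eq_inv', Matrix.smul_mul,
        mul_smul]
      congr 1
      ext i j
      fin_cases i <;> fin_cases j <;> simp [mul_comm]

variable {g : (Fin 2 → ℝ) → Matrix (Fin 2) (Fin 2) ℝ} {x : Fin 2 → ℝ}

lemma exists_ricci_eq_mul_metric {Γ : (Fin 2 → ℝ) → Fin 2 → Fin 2 → Fin 2 → ℝ}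
    (hsymm : (g x).IsSymm) (hdet : IsUnit (g x).det)
    (hskew : (g x * riemann Γ x 0 1)ᵀ = -(g x * riemann Γ x 0 1)) :
    ∃ k : ℝ, ∀ μ ν, ricci Γ x μ ν = k * g x μ ν := by
  obtain ⟨k, hk⟩ := exists_eq_smul_of_transpose_mul_eq_neg hsymm hdet hskew
  have hg10 : g x 1 0 = g x 0 1 := hsymm.apply 0 1
  refine ⟨k, fun μ ν => ?_⟩
  rw [ricci_eq_sum_riemann]
  fin_cases μ <;> fin_cases ν <;>
    simp [Fin.sum_univ_two, riemann_self, riemann_swap 0 1, hk, hg10]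

lemma ricci_christoffel_two_dim (hg : ∀ μ ν, ContDiffAt ℝ 2 (fun y => g y μ ν) x)
    (hsymm : ∀ᶠ y in 𝓝 x, (g y).IsSymm) (hdet : IsUnit (g x).det) (μ ν : Fin 2) :
    ricci (christoffel g) x μ ν = (1 / 2) * scalarCurv g x * g x μ ν := by
  have hcompat : ∀ᶠ y in 𝓝 x, IsMetricConnectionAt g (christoffel g) y := by
    filter_upwards [hsymm.eventually_nhds,
      eventually_isUnit_det (fun i j => (hg i j).differentiableAt two_ne_zero) hdet]
      with y using isMetricConnectionAt_christoffel
  obtain ⟨k, hk⟩ := exists_ricci_eq_mul_metric hsymm.self_of_nhds hdet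
    (transpose_metric_mul_riemann hg hsymm.self_of_nhds
      (differentiableAt_christoffel hg hdet) hcompat 0 1)
  have hR : scalarCurv g x = 2 * k := by
    simpa [scalarCurv] using sum_inv_mul_of_eq_mul hsymm.self_of_nhds hdet hk
  rw [hk, hR]
  ring

end TwoDim

section CovariantDerivative

variable {n : ℕ}

/-- Covariant derivative `∇_σ ω_μ` of a covector field `ω`. -/
noncomputable def covDerivCovector (Γ : (Fin n → ℝ) → Fin n → Fin n → Fin n → ℝ)
    (ω : (Fin n → ℝ) → Fin n → ℝ) (x : Fin n → ℝ) (σ μ : Fin n) : ℝ :=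
  pd (fun y => ω y μ) σ x - ∑ α, Γ x α μ σ * ω x α

/-- Divergence `∇_ν T^ν_{μσ}` of a `(1,2)`-tensor field `T`, with the upper index as first
argument. -/
noncomputable def covDivTensor (Γ T : (Fin n → ℝ) → Fin n → Fin n → Fin n → ℝ)
    (x : Fin n → ℝ) (μ σ : Fin n) : ℝ :=
  ∑ ν, pd (fun y => T y ν μ σ) ν x + ∑ ν, ∑ α, Γ x ν α ν * T x α μ σ
    - ∑ ν, ∑ α, Γ x α μ ν * T x ν α σ - ∑ ν, ∑ α, Γ x α σ ν * T x ν μ α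

variable {Γ S T : (Fin n → ℝ) → Fin n → Fin n → Fin n → ℝ} {x : Fin n → ℝ}

lemma covDerivCovector_const_mul {ω : (Fin n → ℝ) → Fin n → ℝ}
    (hω : ∀ μ, DifferentiableAt ℝ (fun y => ω y μ) x) (c : ℝ) (σ μ : Fin n) :
    covDerivCovector Γ (fun y μ => c * ω y μ) x σ μ = c * covDerivCovector Γ ω x σ μ := by
  simp only [covDerivCovector, pd_const_mul (hω μ), mul_left_comm _ c, ← Finset.mul_sum, mul_sub]

lemma covDivTensor_add (hS : ∀ σ μ ν, DifferentiableAt ℝ (fun y => S y σ μ ν) x)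
    (hT : ∀ σ μ ν, DifferentiableAt ℝ (fun y => T y σ μ ν) x) (μ σ : Fin n) :
    covDivTensor Γ (S + T) x μ σ = covDivTensor Γ S x μ σ + covDivTensor Γ T x μ σ := by
  simp only [covDivTensor, Pi.add_apply, pd_add (hS _ _ _) (hT _ _ _), mul_add,
    Finset.sum_add_distrib]
  ring

lemma covDivTensor_const_smul (hT : ∀ σ μ ν, DifferentiableAt ℝ (fun y => T y σ μ ν) x) (c : ℝ)
    (μ σ : Fin n) : covDivTensor Γ (c • T) x μ σ = c * covDivTensor Γ T x μ σ := by
  simp only [covDivTensor, Pi.smul_apply, smul_eq_mul, pd_const_mul (hT _ _ _),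
    mul_left_comm _ c, ← Finset.mul_sum]
  ring

lemma covDivTensor_sub (hS : ∀ σ μ ν, DifferentiableAt ℝ (fun y => S y σ μ ν) x)
    (hT : ∀ σ μ ν, DifferentiableAt ℝ (fun y => T y σ μ ν) x) (μ σ : Fin n) :
    covDivTensor Γ (S - T) x μ σ = covDivTensor Γ S x μ σ - covDivTensor Γ T x μ σ := by
  simp only [covDivTensor, Pi.sub_apply, pd_sub (hS _ _ _) (hT _ _ _), mul_sub,
    Finset.sum_sub_distrib]
  ring

lemma covDivTensor_delta_right (ω : (Fin n → ℝ) → Fin n → ℝ) (μ σ : Fin n) :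
    covDivTensor Γ (fun y ρ μ ν => if ρ = ν then ω y μ else 0) x μ σ =
      covDerivCovector Γ ω x σ μ := by
  simp [covDivTensor, covDerivCovector, pd_ite_zero, add_sub_right_comm]

lemma covDivTensor_delta_left (ω : (Fin n → ℝ) → Fin n → ℝ) (μ σ : Fin n) :
    covDivTensor Γ (fun y ρ μ ν => if ρ = μ then ω y ν else 0) x μ σ =
      covDerivCovector Γ ω x μ σ := by
  simp [covDivTensor, covDerivCovector, pd_ite_zero]

lemma covDivTensor_metric_mul {g : (Fin n → ℝ) → Matrix (Fin n) (Fin n) ℝ}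
    {B : (Fin n → ℝ) → Fin n → ℝ} (hg : ∀ μ ν, DifferentiableAt ℝ (fun y => g y μ ν) x)
    (hsymm : ∀ᶠ y in 𝓝 x, (g y).IsSymm) (hdet : IsUnit (g x).det)
    (hB : ∀ α, DifferentiableAt ℝ (fun y => B y α) x) (μ σ : Fin n) :
    covDivTensor (christoffel g) (fun y ρ μ ν => g y μ ν * B y ρ) x μ σ =
      g x μ σ * covDiv g B x := by
  have pd_metric_mul (ν : Fin n) : pd (fun y => g y μ σ) ν x * B x ν =
      ∑ α, christoffel g x α μ ν * (g x α σ * B x ν)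
        + ∑ α, christoffel g x α σ ν * (g x μ α * B x ν) := by
    simp only [pd_metric hsymm hdet, hsymm.self_of_nhds.apply σ, add_mul, Finset.sum_mul,
      mul_assoc, mul_left_comm]
  simp only [covDivTensor, covDiv, pd_mul (hg _ _) (hB _), pd_metric_mul, Finset.sum_add_distrib,
    mul_add, Finset.mul_sum, mul_left_comm (g x μ σ)]
  ring

lemma ricci_add (hΓ : ∀ σ μ ν, DifferentiableAt ℝ (fun y => Γ y σ μ ν) x)
    (hΓsymm : ∀ σ μ ν, Γ x σ μ ν = Γ x σ ν μ)
    (hT : ∀ σ μ ν, DifferentiableAt ℝ (fun y => T y σ μ ν) x) (μ σ : Fin n) :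
    ricci (Γ + T) x μ σ = ricci Γ x μ σ
      + (covDivTensor Γ T x μ σ - covDerivCovector Γ (fun y α => ∑ ν, T y ν α ν) x σ μ)
      + (∑ ν, ∑ α, T x ν α ν * T x α μ σ - ∑ ν, ∑ α, T x ν α σ * T x α μ ν) := by
  simp only [ricci, covDivTensor, covDerivCovector, Pi.add_apply, pd_add (hΓ _ _ _) (hT _ _ _),
    pd_sum fun ν _ => hT ν μ ν, add_mul, mul_add, Finset.sum_add_distrib, Finset.mul_sum]
  have trace_term : ∑ ν, ∑ α, T x ν α ν * Γ x α μ σ = ∑ α, ∑ ν, Γ x α μ σ * T x ν α ν := by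
    rw [Finset.sum_comm]
    simp only [mul_comm]
  have lower_term : ∑ ν, ∑ α, T x ν α σ * Γ x α μ ν = ∑ ν, ∑ α, Γ x α μ ν * T x ν α σ := by
    simp only [mul_comm]
  have derivative_index_term :
      ∑ ν, ∑ α, Γ x ν α σ * T x α μ ν = ∑ ν, ∑ α, Γ x α σ ν * T x ν μ α := by
    rw [Finset.sum_comm]
    simp only [hΓsymm _ σ]
  rw [trace_term, lower_term, derivative_index_term]
  ring

end CovariantDerivative

section Weyl

variable {n : ℕ} {g : (Fin n → ℝ) → Matrix (Fin n) (Fin n) ℝ} {B : (Fin n → ℝ) → Fin n → ℝ}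
  {x : Fin n → ℝ}

/-- The difference tensor `(1/2)(δ^σ_ν B_μ + δ^σ_μ B_ν - g_{μν} B^σ)` between the Weyl and the
Levi-Civita connection. -/
noncomputable def weylDifference (g : (Fin n → ℝ) → Matrix (Fin n) (Fin n) ℝ)
    (B : (Fin n → ℝ) → Fin n → ℝ) : (Fin n → ℝ) → Fin n → Fin n → Fin n → ℝ :=
  (1 / 2 : ℝ) • ((fun x σ μ ν => if σ = ν then lowerIdx g B x μ else 0)
    + (fun x σ μ ν => if σ = μ then lowerIdx g B x ν else 0) - fun x σ μ ν => g x μ ν * B x σ)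

lemma weylDifference_apply (σ μ ν : Fin n) :
    weylDifference g B x σ μ ν = (1 / 2) * ((if σ = ν then lowerIdx g B x μ else 0)
      + (if σ = μ then lowerIdx g B x ν else 0) - g x μ ν * B x σ) :=
  rfl

lemma weyl_eq_christoffel_add : weyl g B = christoffel g + weylDifference g B :=
  rfl

lemma differentiableAt_lowerIdx (hg : ∀ μ ν, DifferentiableAt ℝ (fun y => g y μ ν) x)
    (hB : ∀ α, DifferentiableAt ℝ (fun y => B y α) x) (μ : Fin n) :
    DifferentiableAt ℝ (fun y => lowerIdx g B y μ) x := by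
  unfold lowerIdx
  fun_prop

lemma differentiableAt_weylDifference (hg : ∀ μ ν, DifferentiableAt ℝ (fun y => g y μ ν) x)
    (hB : ∀ α, DifferentiableAt ℝ (fun y => B y α) x) (σ μ ν : Fin n) :
    DifferentiableAt ℝ (fun y => weylDifference g B y σ μ ν) x :=
  (((differentiableAt_ite_zero (differentiableAt_lowerIdx hg hB μ)).add
    (differentiableAt_ite_zero (differentiableAt_lowerIdx hg hB ν))).sub
      ((hg μ ν).mul (hB σ))).const_mul _

lemma covDivTensor_weylDifference (hg : ∀ μ ν, DifferentiableAt ℝ (fun y => g y μ ν) x)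
    (hsymm : ∀ᶠ y in 𝓝 x, (g y).IsSymm) (hdet : IsUnit (g x).det)
    (hB : ∀ α, DifferentiableAt ℝ (fun y => B y α) x) (μ σ : Fin n) :
    covDivTensor (christoffel g) (weylDifference g B) x μ σ =
      (1 / 2) * (covDerivCovector (christoffel g) (lowerIdx g B) x σ μ
        + covDerivCovector (christoffel g) (lowerIdx g B) x μ σ - g x μ σ * covDiv g B x) := by
  have hb := differentiableAt_lowerIdx hg hB
  have hright (ρ μ ν : Fin n) := differentiableAt_ite_zero (p := ρ = ν) (hb μ)
  have hleft (ρ μ ν : Fin n) := differentiableAt_ite_zero (p := ρ = μ) (hb ν)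
  have hgB (ρ μ ν : Fin n) := (hg μ ν).mul (hB ρ)
  rw [weylDifference, covDivTensor_const_smul, covDivTensor_sub, covDivTensor_add hright hleft,
    covDivTensor_delta_right, covDivTensor_delta_left, covDivTensor_metric_mul hg hsymm hdet hB]
  · exact fun ρ μ ν => (hright ρ μ ν).add (hleft ρ μ ν)
  · exact hgB
  · exact fun ρ μ ν => ((hright ρ μ ν).add (hleft ρ μ ν)).sub (hgB ρ μ ν)

lemma weylDifference_comm (hsymm : (g x).IsSymm) (σ μ ν : Fin n) :
    weylDifference g B x σ μ ν = weylDifference g B x σ ν μ := by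
  rw [weylDifference_apply, weylDifference_apply, hsymm.apply μ ν, add_comm (ite _ _ _)]

lemma sum_mul_weylDifference (w : Fin n → ℝ) (μ ν : Fin n) :
    ∑ α, w α * weylDifference g B x α μ ν =
      (1 / 2) * (w ν * lowerIdx g B x μ + w μ * lowerIdx g B x ν
        - g x μ ν * ∑ α, w α * B x α) := by
  simp only [weylDifference_apply, mul_left_comm (w _), ← Finset.mul_sum, mul_add, mul_sub,
    Finset.sum_sub_distrib, Finset.sum_add_distrib]
  simp

lemma weylDifference_trace (μ : Fin n) :
    ∑ ν, weylDifference g B x ν μ ν = (n / 2) * lowerIdx g B x μ := by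
  simp only [weylDifference_apply, ← Finset.mul_sum, Finset.sum_sub_distrib,
    Finset.sum_add_distrib]
  simp only [↓reduceIte, lowerIdx, Finset.sum_const, Finset.card_univ, Fintype.card_fin,
    nsmul_eq_mul, Finset.sum_ite_eq', Finset.mem_univ, add_sub_cancel_right]
  ring

lemma sum_lowerIdx_mul_weylDifference (μ σ : Fin n) :
    ∑ α, lowerIdx g B x α * weylDifference g B x α μ σ =
      lowerIdx g B x μ * lowerIdx g B x σ
        - (1 / 2) * (g x μ σ * ∑ α, lowerIdx g B x α * B x α) := by
  rw [sum_mul_weylDifference]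
  ring

lemma sum_sum_trace_mul_weylDifference (μ σ : Fin n) :
    ∑ ν, ∑ α, weylDifference g B x ν α ν * weylDifference g B x α μ σ =
      (n / 2) * (lowerIdx g B x μ * lowerIdx g B x σ
        - (1 / 2) * (g x μ σ * ∑ α, lowerIdx g B x α * B x α)) := by
  rw [Finset.sum_comm, ← sum_lowerIdx_mul_weylDifference]
  simp only [← Finset.sum_mul, weylDifference_trace, mul_assoc, Finset.mul_sum]

lemma sum_metric_mul_weylDifference_mul (hsymm : (g x).IsSymm) (μ σ : Fin n) :
    ∑ ν, g x μ ν * ∑ α, weylDifference g B x ν α σ * B x α =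
      (1 / 2) * (g x μ σ * ∑ α, lowerIdx g B x α * B x α) := by
  calc ∑ ν, g x μ ν * ∑ α, weylDifference g B x ν α σ * B x α
      = ∑ α, (∑ ν, g x μ ν * weylDifference g B x ν α σ) * B x α := by
        simp only [Finset.mul_sum, Finset.sum_mul, mul_assoc]
        exact Finset.sum_comm
    _ = ∑ α, (1 / 2) * (g x μ σ * (lowerIdx g B x α * B x α)
          + lowerIdx g B x σ * (g x μ α * B x α) - lowerIdx g B x μ * (g x σ α * B x α)) := by
        refine Finset.sum_congr rfl fun α _ => ?_
        rw [sum_mul_weylDifference, hsymm.apply σ α, ← lowerIdx]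
        ring
    _ = (1 / 2) * (g x μ σ * ∑ α, lowerIdx g B x α * B x α) := by
        simp only [← Finset.mul_sum, Finset.sum_sub_distrib, Finset.sum_add_distrib, lowerIdx]
        ring

lemma sum_sum_weylDifference_mul_weylDifference (hsymm : (g x).IsSymm) (μ σ : Fin n) :
    ∑ ν, ∑ α, weylDifference g B x ν α σ * weylDifference g B x α μ ν =
      ((n + 2) / 4) * (lowerIdx g B x μ * lowerIdx g B x σ)
        - (1 / 2) * (g x μ σ * ∑ α, lowerIdx g B x α * B x α) := by
  calc ∑ ν, ∑ α, weylDifference g B x ν α σ * weylDifference g B x α μ ν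
      = (1 / 2) * ((∑ ν, weylDifference g B x ν σ ν) * lowerIdx g B x μ
          + ∑ ν, lowerIdx g B x ν * weylDifference g B x ν μ σ
          - ∑ ν, g x μ ν * ∑ α, weylDifference g B x ν α σ * B x α) := by
        simp only [sum_mul_weylDifference, ← Finset.mul_sum, Finset.sum_sub_distrib,
          Finset.sum_add_distrib, Finset.sum_mul, weylDifference_comm hsymm _ σ,
          mul_comm (lowerIdx g B x _)]
    _ = _ := by
        rw [weylDifference_trace, sum_lowerIdx_mul_weylDifference,
          sum_metric_mul_weylDifference_mul hsymm]
        ring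

lemma ricci_weyl (hg : ∀ μ ν, ContDiffAt ℝ 2 (fun y => g y μ ν) x)
    (hsymm : ∀ᶠ y in 𝓝 x, (g y).IsSymm) (hdet : IsUnit (g x).det)
    (hB : ∀ α, DifferentiableAt ℝ (fun y => B y α) x) (μ σ : Fin n) :
    ricci (weyl g B) x μ σ = ricci (christoffel g) x μ σ
      + (1 / 2) * (covDerivCovector (christoffel g) (lowerIdx g B) x σ μ
        + covDerivCovector (christoffel g) (lowerIdx g B) x μ σ - g x μ σ * covDiv g B x)
      - (n / 2) * covDerivCovector (christoffel g) (lowerIdx g B) x σ μ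
      + ((n - 2) / 4) * (lowerIdx g B x μ * lowerIdx g B x σ
        - g x μ σ * ∑ α, lowerIdx g B x α * B x α) := by
  have hg' (i j : Fin n) : DifferentiableAt ℝ (fun y => g y i j) x :=
    (hg i j).differentiableAt two_ne_zero
  rw [weyl_eq_christoffel_add, ricci_add (differentiableAt_christoffel hg hdet)
    (christoffel_comm hsymm) (differentiableAt_weylDifference hg' hB),
    covDivTensor_weylDifference hg' hsymm hdet hB]
  simp only [weylDifference_trace]
  rw [covDerivCovector_const_mul (differentiableAt_lowerIdx hg' hB),
    sum_sum_trace_mul_weylDifference,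
    sum_sum_weylDifference_mul_weylDifference hsymm.self_of_nhds]
  ring

lemma ricciSym_weyl (hg : ∀ μ ν, ContDiffAt ℝ 2 (fun y => g y μ ν) x)
    (hsymm : ∀ᶠ y in 𝓝 x, (g y).IsSymm) (hdet : IsUnit (g x).det)
    (hB : ∀ α, DifferentiableAt ℝ (fun y => B y α) x) (μ σ : Fin n) :
    ricciSym (weyl g B) x μ σ = ricciSym (christoffel g) x μ σ
      - (1 / 2) * covDiv g B x * g x μ σ
      - ((n - 2) / 4) * (covDerivCovector (christoffel g) (lowerIdx g B) x σ μ
        + covDerivCovector (christoffel g) (lowerIdx g B) x μ σ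
        - lowerIdx g B x μ * lowerIdx g B x σ
        + g x μ σ * ∑ α, lowerIdx g B x α * B x α) := by
  rw [ricciSym, ricciSym, ricci_weyl hg hsymm hdet hB, ricci_weyl hg hsymm hdet hB,
    hsymm.self_of_nhds.apply μ σ]
  ring

end Weyl

theorem weyl_connection_ricci_two_dim_general
    {g : (Fin 2 → ℝ) → Matrix (Fin 2) (Fin 2) ℝ} {B : (Fin 2 → ℝ) → Fin 2 → ℝ}
    {x : Fin 2 → ℝ} (hg : ∀ μ ν, ContDiffAt ℝ 2 (fun y => g y μ ν) x)
    (hsymm : ∀ᶠ y in 𝓝 x, (g y).IsSymm) (hdet : IsUnit (g x).det)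
    (hB : ∀ α, DifferentiableAt ℝ (fun y => B y α) x) :
    (∀ μ ν, ricciSym (weyl g B) x μ ν =
      (1 / 2) * (scalarCurv g x - covDiv g B x) * g x μ ν) ∧
    (∑ μ, ∑ ν, (g x)⁻¹ μ ν * ricciSym (weyl g B) x μ ν = scalarCurv g x - covDiv g B x) ∧
    (∀ μ ν, ricciSym (weyl g B) x μ ν
      - (1 / 2) * (∑ ρ, ∑ τ, (g x)⁻¹ ρ τ * ricciSym (weyl g B) x ρ τ) * g x μ ν = 0) := by
  have hricci (μ ν : Fin 2) : ricciSym (weyl g B) x μ ν =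
      (1 / 2) * (scalarCurv g x - covDiv g B x) * g x μ ν := by
    rw [ricciSym_weyl hg hsymm hdet hB, ricciSym, ricci_christoffel_two_dim hg hsymm hdet,
      ricci_christoffel_two_dim hg hsymm hdet, hsymm.self_of_nhds.apply μ ν]
    push_cast
    ring
  have htrace : ∑ μ, ∑ ν, (g x)⁻¹ μ ν * ricciSym (weyl g B) x μ ν =
      scalarCurv g x - covDiv g B x := by
    rw [sum_inv_mul_of_eq_mul hsymm.self_of_nhds hdet hricci, Fintype.card_fin]
    push_cast
    ring
  exact ⟨hricci, htrace, fun μ ν => by rw [htrace, hricci, sub_self]⟩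

/-- In dimension 2 the symmetrized Ricci tensor of the Weyl connection
`W(g,B)` equals `(1/2)(R(g) - D_α B^α) g_{μν}`; consequently the tensor
`R_{(μν)}(W) - (1/2) 𝓡 g_{μν}` vanishes identically, where
`𝓡 = g^{μν} R_{(μν)}(W) = R(g) - D_α B^α`. -/
theorem weyl_connection_ricci_two_dim
    (g : (Fin 2 → ℝ) → Matrix (Fin 2) (Fin 2) ℝ)
    (hg_smooth : ∀ μ ν : Fin 2, ContDiff ℝ (⊤ : ℕ∞) fun y => g y μ ν)
    (hg_symm : ∀ y, (g y).IsSymm)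
    (hg_det : ∀ y, IsUnit (g y).det)
    (B : (Fin 2 → ℝ) → Fin 2 → ℝ)
    (hB : ∀ α : Fin 2, ContDiff ℝ (⊤ : ℕ∞) fun y => B y α) :
    (∀ (x : Fin 2 → ℝ) (μ ν : Fin 2),
      ricciSym (weyl g B) x μ ν
        = (1 / 2) * (scalarCurv g x - covDiv g B x) * g x μ ν) ∧
    (∀ x : Fin 2 → ℝ,
      ∑ μ, ∑ ν, (g x)⁻¹ μ ν * ricciSym (weyl g B) x μ ν
        = scalarCurv g x - covDiv g B x) ∧
    (∀ (x : Fin 2 → ℝ) (μ ν : Fin 2),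
      ricciSym (weyl g B) x μ ν
        - (1 / 2) * (∑ ρ, ∑ τ, (g x)⁻¹ ρ τ * ricciSym (weyl g B) x ρ τ)
          * g x μ ν = 0) := by
  have pointwise (x : Fin 2 → ℝ) := weyl_connection_ricci_two_dim_general (B := B) (x := x)
    (fun μ ν => (contDiff_infty.1 (hg_smooth μ ν) 2).contDiffAt)
    (.of_forall hg_symm) (hg_det x) fun α => (hB α).differentiable (by simp) x
  exact ⟨fun x => (pointwise x).1, fun x => (pointwise x).2.1, fun x => (pointwise x).2.2⟩
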